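/- (Corollary.) Let A = (A₁, A₂) be a pure commuting 2-contraction on H with D_{A*} injective, let λ = (λ₁,λ₂) ∈ 𝔻², λ ≠ 0, and assume the pair (B₁(λ),B₂(λ)) is also pure. Let (z₁,z₂) ∈ 𝔻². Then (z₁,z₂) ∈ σ_T^{(1)}(A₁,A₂) and Φ_λ(z₁,z₂) ∈ σ_T^{(1)}(B₁(λ),B₂(λ)) hold simultaneously if and only if there exist nonzero vectors x, y ∈ H such that the four vectors (x,0), (0,x), (1_{H⊕H} − Λ*A)⁻¹(D_Λ(y,0)) and (1_{H⊕H} − Λ*A)⁻¹(D_Λ(0,y)) are all solutions X of the equation θ_A(z₁,z₂)(D_A X) = 0. -/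

import Mathlib

open ContinuousLinearMap Filter

/-!
Regard a pair of operators as a row `A : H ⊕ H → H` and the scalars `z` as the row `Z`. Since
`A D_A = D_{A*} A`, we get `θ_A(z) D_A = D_{A*} (1 - Z A*)⁻¹ (Z - A)`; when `D_{A*}` is injective,
`θ_A(z) D_A X = 0` therefore means `A X = Z X`. On `(x, 0)` and `(0, x)` this says that `x` is a
joint eigenvector of `(A₁, A₂)` at `z`.

The Möbius map `Φ_Λ` makes sense on all rows, scalar or not, and
`Φ_Λ(A) - Φ_Λ(Z) = D_{Λ*} (1 - Z Λ*)⁻¹ (Z - A) (1 - Λ* A)⁻¹ D_Λ`. Hence the same equation at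
`(1 - Λ* A)⁻¹ D_Λ X` means `Φ_Λ(A) X = Φ_Λ(Z) X`, and `Φ_Λ(Z)` is the row of the scalars `Φ_λ(z)`.
-/

lemma isUnit_and_inverse_eq {M₀ : Type*} [MonoidWithZero M₀] {a b : M₀} (hab : a * b = 1)
    (hba : b * a = 1) : IsUnit a ∧ Ring.inverse a = b :=
  ⟨⟨⟨a, b, hab, hba⟩, rfl⟩, Ring.inverse_unit ⟨a, b, hab, hba⟩⟩

lemma isUnit_one_sub_smul_one_and_inverse_eq {𝕜 R : Type*} [Field 𝕜] [Ring R] [Algebra 𝕜 R]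
    {c : 𝕜} (hc : c ≠ 1) :
    IsUnit (1 - c • (1 : R)) ∧ Ring.inverse (1 - c • (1 : R)) = (1 - c)⁻¹ • (1 : R) := by
  have hc' : 1 - c ≠ 0 := sub_ne_zero.2 hc.symm
  rw [show 1 - c • (1 : R) = (1 - c) • 1 by rw [sub_smul, one_smul]]
  apply isUnit_and_inverse_eq <;> simp [smul_smul, hc']

section PushThrough

variable {R M N : Type*} [Ring R]
  [AddCommGroup M] [Module R M] [TopologicalSpace M] [IsTopologicalAddGroup M]
  [AddCommGroup N] [Module R N] [TopologicalSpace N] [IsTopologicalAddGroup N]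

lemma inverse_one_sub_comp_comp {A : M →L[R] N} {B : N →L[R] M} (hAB : IsUnit (1 - A ∘L B))
    (hBA : IsUnit (1 - B ∘L A)) :
    Ring.inverse (1 - A ∘L B) ∘L A = A ∘L Ring.inverse (1 - B ∘L A) := by
  have push : A ∘L (1 - B ∘L A) = (1 - A ∘L B) ∘L A := by ext; simp
  calc Ring.inverse (1 - A ∘L B) ∘L A
      = Ring.inverse (1 - A ∘L B) ∘L A ∘L ((1 - B ∘L A) * Ring.inverse (1 - B ∘L A)) := by
        rw [Ring.mul_inverse_cancel _ hBA]; rfl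
    _ = (Ring.inverse (1 - A ∘L B) * (1 - A ∘L B)) ∘L A ∘L Ring.inverse (1 - B ∘L A) := by
        rw [mul_def, mul_def, comp_assoc, ← comp_assoc A, push, comp_assoc]
    _ = A ∘L Ring.inverse (1 - B ∘L A) := by rw [Ring.inverse_mul_cancel _ hAB]; rfl

lemma inverse_one_sub_comp_comp_sub {A Z : M →L[R] N} {B : N →L[R] M}
    (hAB : IsUnit (1 - A ∘L B)) (hBA : IsUnit (1 - B ∘L A)) (hZB : IsUnit (1 - Z ∘L B)) :
    Ring.inverse (1 - Z ∘L B) ∘L Z - Ring.inverse (1 - A ∘L B) ∘L A =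
      Ring.inverse (1 - Z ∘L B) ∘L (Z - A) ∘L Ring.inverse (1 - B ∘L A) := by
  have hZ : Z = Z ∘L (1 - B ∘L A) ∘L Ring.inverse (1 - B ∘L A) := by
    rw [← mul_def, Ring.mul_inverse_cancel _ hBA]; rfl
  have hA : A = Ring.inverse (1 - Z ∘L B) ∘L (1 - Z ∘L B) ∘L A := by
    rw [← comp_assoc, ← mul_def, Ring.inverse_mul_cancel _ hZB]; rfl
  have cross : Z ∘L (1 - B ∘L A) - (1 - Z ∘L B) ∘L A = Z - A := by ext; simp
  rw [inverse_one_sub_comp_comp hAB hBA]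
  nth_rw 2 [hZ]
  nth_rw 3 [hA]
  rw [← cross]
  simp only [comp_sub, sub_comp, comp_assoc]

end PushThrough

/-- The joint point spectrum `σ_T^{(1)}` of a pair of operators. -/
def jointPointSpectrum {R M : Type*} [Semiring R] [TopologicalSpace M] [AddCommMonoid M]
    [Module R M] (A₁ A₂ : M →L[R] M) : Set (R × R) :=
  {w | ∃ x : M, x ≠ 0 ∧ A₁ x = w.1 • x ∧ A₂ x = w.2 • x}

section Row

variable {𝕜 E₁ E₂ F : Type*} [RCLike 𝕜]
  [NormedAddCommGroup E₁] [InnerProductSpace 𝕜 E₁]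
  [NormedAddCommGroup E₂] [InnerProductSpace 𝕜 E₂]
  [NormedAddCommGroup F] [InnerProductSpace 𝕜 F]

/-- The row operator `(x, y) ↦ A₁ x + A₂ y` on the Hilbert sum. -/
noncomputable def rowOp (A₁ : E₁ →L[𝕜] F) (A₂ : E₂ →L[𝕜] F) : WithLp 2 (E₁ × E₂) →L[𝕜] F :=
  A₁.coprod A₂ ∘L WithLp.prodContinuousLinearEquiv 2 𝕜 E₁ E₂

lemma rowOp_apply (A₁ : E₁ →L[𝕜] F) (A₂ : E₂ →L[𝕜] F) (v : WithLp 2 (E₁ × E₂)) :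
    rowOp A₁ A₂ v = A₁ v.fst + A₂ v.snd :=
  rfl

lemma eq_rowOp {T : WithLp 2 (E₁ × E₂) →L[𝕜] F} {A₁ : E₁ →L[𝕜] F} {A₂ : E₂ →L[𝕜] F}
    (h : ∀ x y, T (WithLp.toLp 2 (x, y)) = A₁ x + A₂ y) : T = rowOp A₁ A₂ := by
  ext v
  exact h v.fst v.snd

variable (F) in
/-- The row of the scalars `z = (z₁, z₂)` acting on `F`. -/
noncomputable def scalarRow (z₁ z₂ : 𝕜) : WithLp 2 (F × F) →L[𝕜] F :=
  rowOp (z₁ • 1) (z₂ • 1)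

lemma scalarRow_apply (z₁ z₂ : 𝕜) (v : WithLp 2 (F × F)) :
    scalarRow F z₁ z₂ v = z₁ • v.fst + z₂ • v.snd :=
  rfl

lemma mem_jointPointSpectrum_iff_rowOp {A₁ A₂ : F →L[𝕜] F} {z₁ z₂ : 𝕜} :
    (z₁, z₂) ∈ jointPointSpectrum A₁ A₂ ↔ ∃ x : F, x ≠ 0 ∧
      rowOp A₁ A₂ (WithLp.toLp 2 (x, 0)) = scalarRow F z₁ z₂ (WithLp.toLp 2 (x, 0)) ∧
      rowOp A₁ A₂ (WithLp.toLp 2 (0, x)) = scalarRow F z₁ z₂ (WithLp.toLp 2 (0, x)) := by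
  simp [jointPointSpectrum, rowOp_apply, scalarRow_apply]

variable [CompleteSpace E₁] [CompleteSpace E₂] [CompleteSpace F]

lemma adjoint_rowOp_apply (A₁ : E₁ →L[𝕜] F) (A₂ : E₂ →L[𝕜] F) (h : F) :
    adjoint (rowOp A₁ A₂) h = WithLp.toLp 2 (adjoint A₁ h, adjoint A₂ h) :=
  ext_inner_right 𝕜 fun v => by
    simp [adjoint_inner_left, rowOp_apply, WithLp.prod_inner_apply, inner_add_right]

lemma rowOp_comp_adjoint_rowOp {G : Type*} [NormedAddCommGroup G] [InnerProductSpace 𝕜 G]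
    (A₁ : E₁ →L[𝕜] G) (A₂ : E₂ →L[𝕜] G) (B₁ : E₁ →L[𝕜] F) (B₂ : E₂ →L[𝕜] F) :
    rowOp A₁ A₂ ∘L adjoint (rowOp B₁ B₂) = A₁ ∘L adjoint B₁ + A₂ ∘L adjoint B₂ := by
  ext h
  simp [adjoint_rowOp_apply, rowOp_apply]

lemma scalarRow_comp_adjoint_rowOp (z₁ z₂ : 𝕜) (A₁ A₂ : F →L[𝕜] F) :
    scalarRow F z₁ z₂ ∘L adjoint (rowOp A₁ A₂) = z₁ • adjoint A₁ + z₂ • adjoint A₂ :=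
  rowOp_comp_adjoint_rowOp ..

lemma scalarRow_comp_adjoint_scalarRow (z₁ z₂ μ₁ μ₂ : 𝕜) :
    scalarRow F z₁ z₂ ∘L adjoint (scalarRow F μ₁ μ₂) =
      (z₁ * starRingEnd 𝕜 μ₁ + z₂ * starRingEnd 𝕜 μ₂) • (1 : F →L[𝕜] F) := by
  rw [scalarRow.eq_def F μ₁, scalarRow_comp_adjoint_rowOp]
  simp [← star_eq_adjoint, smul_smul, add_smul]

lemma scalarRow_comp_adjoint_self (μ₁ μ₂ : 𝕜) :
    scalarRow F μ₁ μ₂ ∘L adjoint (scalarRow F μ₁ μ₂) =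
      ((‖μ₁‖ ^ 2 + ‖μ₂‖ ^ 2 : ℝ) : 𝕜) • (1 : F →L[𝕜] F) := by
  rw [scalarRow_comp_adjoint_scalarRow, RCLike.mul_conj, RCLike.mul_conj]
  push_cast
  rfl

end Row

lemma norm_sq_add_norm_sq_pos {V W : Type*} [NormedAddCommGroup V] [NormedAddCommGroup W] {v : V}
    {w : W} (h : (v, w) ≠ (0, 0)) : 0 < ‖v‖ ^ 2 + ‖w‖ ^ 2 := by
  obtain hv | hw : v ≠ 0 ∨ w ≠ 0 := by simpa [imp_iff_not_or] using h
  · positivity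
  · positivity

lemma mul_conj_add_mul_conj_ne_one {𝕜 : Type*} [RCLike 𝕜] {z₁ z₂ μ₁ μ₂ : 𝕜}
    (hz : ‖z₁‖ ^ 2 + ‖z₂‖ ^ 2 < 1) (hμ : ‖μ₁‖ ^ 2 + ‖μ₂‖ ^ 2 < 1) :
    z₁ * starRingEnd 𝕜 μ₁ + z₂ * starRingEnd 𝕜 μ₂ ≠ 1 := by
  intro h
  have : 1 ≤ ‖z₁‖ * ‖μ₁‖ + ‖z₂‖ * ‖μ₂‖ := by
    simpa [h] using norm_add_le (z₁ * starRingEnd 𝕜 μ₁) (z₂ * starRingEnd 𝕜 μ₂)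
  nlinarith [sq_nonneg (‖z₁‖ - ‖μ₁‖), sq_nonneg (‖z₂‖ - ‖μ₂‖)]

lemma isUnit_one_sub_scalarRow_comp_adjoint_scalarRow {𝕜 F : Type*} [RCLike 𝕜]
    [NormedAddCommGroup F] [InnerProductSpace 𝕜 F] [CompleteSpace F] {z₁ z₂ μ₁ μ₂ : 𝕜}
    (hz : ‖z₁‖ ^ 2 + ‖z₂‖ ^ 2 < 1) (hμ : ‖μ₁‖ ^ 2 + ‖μ₂‖ ^ 2 < 1) :
    IsUnit (1 - scalarRow F z₁ z₂ ∘L adjoint (scalarRow F μ₁ μ₂)) := by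
  rw [scalarRow_comp_adjoint_scalarRow]
  exact (isUnit_one_sub_smul_one_and_inverse_eq (mul_conj_add_mul_conj_ne_one hz hμ)).1

section Hilbert

variable {E F : Type*} [NormedAddCommGroup E] [InnerProductSpace ℂ E] [CompleteSpace E]
  [NormedAddCommGroup F] [InnerProductSpace ℂ F] [CompleteSpace F]

lemma adjoint_comp_self_nonneg (A : E →L[ℂ] F) : 0 ≤ adjoint A ∘L A :=
  nonneg_iff_isPositive _ |>.2 (isPositive_adjoint_comp_self A)

section SquareRoots

variable {C A : E →L[ℂ] F} {P : E →L[ℂ] E} {Q : F →L[ℂ] F}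

/- `C*C P = -C*QC` is self-adjoint, so `C*C` and `P` are commuting positive operators and their
product is positive; being also negative, it vanishes. -/
lemma comp_eq_zero_of_comp_eq_neg (hP : 0 ≤ P) (hQ : 0 ≤ Q) (h : C ∘L P = -(Q ∘L C)) :
    C ∘L P = 0 := by
  set N : E →L[ℂ] E := adjoint C ∘L C
  have hN : 0 ≤ N := adjoint_comp_self_nonneg C
  have hCQC : 0 ≤ adjoint C ∘L Q ∘L C := by
    rw [nonneg_iff_isPositive] at hQ ⊢
    exact hQ.adjoint_conj C
  have hNP : N * P = -(adjoint C ∘L Q ∘L C) := by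
    rw [mul_def, comp_assoc, h, comp_neg]
  have hcomm : Commute N P :=
    ((IsSelfAdjoint.of_nonneg hN).commute_iff (IsSelfAdjoint.of_nonneg hP)).2 <| by
      rw [hNP]; exact (IsSelfAdjoint.of_nonneg hCQC).neg
  have hNP_zero : N * P = 0 :=
    le_antisymm (by rw [hNP]; exact neg_nonpos.2 hCQC) (hcomm.mul_nonneg hN hP)
  rw [← adjoint_comp_self_eq_zero_iff, adjoint_comp, comp_assoc, ← comp_assoc (adjoint C)]
  exact (congrArg (adjoint P ∘L ·) hNP_zero).trans (comp_zero _)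

lemma comp_eq_comp_of_comp_mul_self_eq (hP : 0 ≤ P) (hQ : 0 ≤ Q)
    (h : A ∘L (P * P) = (Q * Q) ∘L A) : A ∘L P = Q ∘L A := by
  set C := A ∘L P - Q ∘L A with hC
  have hPQ : C ∘L P = -(Q ∘L C) := by
    simp only [hC, sub_comp, comp_sub, comp_assoc, neg_sub]
    simp only [← comp_assoc, mul_def] at h ⊢
    rw [h]
  have hCP : C ∘L P = 0 := comp_eq_zero_of_comp_eq_neg hP hQ hPQ
  have hQC : Q ∘L C = 0 := neg_eq_zero.1 (hPQ.symm.trans hCP)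
  have hPC : P ∘L adjoint C = 0 := by
    simpa [(IsSelfAdjoint.of_nonneg hP).adjoint_eq] using congrArg (fun T => adjoint T) hCP
  have hCQ : adjoint C ∘L Q = 0 := by
    simpa [(IsSelfAdjoint.of_nonneg hQ).adjoint_eq] using congrArg (fun T => adjoint T) hQC
  have hCC : C ∘L adjoint C = -(Q ∘L A ∘L adjoint C) := by
    conv_lhs => enter [1]; rw [hC]
    rw [sub_comp, comp_assoc, hPC, comp_zero, zero_sub, comp_assoc]
  have hCCC : adjoint C ∘L C ∘L adjoint C = 0 := by
    rw [hCC, comp_neg, ← comp_assoc, hCQ, zero_comp, neg_zero]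
  have hCC_zero : C ∘L adjoint C = 0 := by
    rw [← adjoint_comp_self_eq_zero_iff, adjoint_comp, adjoint_adjoint, comp_assoc, hCCC, comp_zero]
  have hC_zero : adjoint C = 0 := by
    rwa [← adjoint_comp_self_eq_zero_iff, adjoint_adjoint]
  exact sub_eq_zero.1 <| by simpa using hC_zero

end SquareRoots

section Defect

/-- The defect operator `D_A = (1 - A*A)^{1/2}`; it is meaningful for contractions, the continuous
functional calculus returning `0` when `1 - A*A` is not positive. -/
noncomputable def defectOp (A : E →L[ℂ] F) : E →L[ℂ] E :=
  CFC.sqrt (1 - adjoint A ∘L A)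

lemma defectOp_nonneg (A : E →L[ℂ] F) : 0 ≤ defectOp A :=
  CFC.sqrt_nonneg _

lemma eq_defectOp {A : E →L[ℂ] F} {D : E →L[ℂ] E} (hD : 0 ≤ D)
    (hDD : D * D = 1 - adjoint A ∘L A) : D = defectOp A :=
  (CFC.sqrt_unique hDD hD).symm

lemma norm_le_one_iff_adjoint_comp_self_le_one {A : E →L[ℂ] F} :
    ‖A‖ ≤ 1 ↔ adjoint A ∘L A ≤ 1 := by
  rw [← CStarAlgebra.norm_le_one_iff_of_nonneg _ (adjoint_comp_self_nonneg A),
    norm_adjoint_comp_self, ← abs_le_one_iff_mul_self_le_one, abs_norm]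

lemma norm_le_one_of_mul_self_eq {A : E →L[ℂ] F} {D : E →L[ℂ] E} (hD : 0 ≤ D)
    (hDD : D * D = 1 - adjoint A ∘L A) : ‖A‖ ≤ 1 :=
  norm_le_one_iff_adjoint_comp_self_le_one.2 <|
    sub_nonneg.1 (hDD ▸ (IsSelfAdjoint.of_nonneg hD).mul_self_nonneg)

lemma defectOp_mul_self {A : E →L[ℂ] F} (hA : ‖A‖ ≤ 1) :
    defectOp A * defectOp A = 1 - adjoint A ∘L A :=
  CFC.sqrt_mul_sqrt_self _ (sub_nonneg.2 (norm_le_one_iff_adjoint_comp_self_le_one.1 hA))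

lemma comp_defectOp {A : E →L[ℂ] F} (hA : ‖A‖ ≤ 1) :
    A ∘L defectOp A = defectOp (adjoint A) ∘L A := by
  refine comp_eq_comp_of_comp_mul_self_eq (defectOp_nonneg _) (defectOp_nonneg _) ?_
  rw [defectOp_mul_self hA, defectOp_mul_self (by simpa using hA)]
  ext
  simp

lemma defectOp_adjoint_of_comp_adjoint_eq_smul {L : E →L[ℂ] F} {r : ℝ} (hr : r ≤ 1)
    (hL : L ∘L adjoint L = (r : ℂ) • (1 : F →L[ℂ] F)) :
    defectOp (adjoint L) = ((√(1 - r) : ℝ) : ℂ) • (1 : F →L[ℂ] F) := by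
  refine (eq_defectOp ?_ ?_).symm
  · rw [Complex.coe_smul]
    exact smul_nonneg (Real.sqrt_nonneg _) zero_le_one
  · rw [adjoint_adjoint, hL, smul_mul_smul_comm, mul_one, ← Complex.ofReal_mul,
      Real.mul_self_sqrt (sub_nonneg.2 hr)]
    push_cast
    module

lemma defectOp_of_comp_adjoint_eq_smul {L : E →L[ℂ] F} {r : ℝ} (hr₀ : 0 < r) (hr₁ : r ≤ 1)
    (hL : L ∘L adjoint L = (r : ℂ) • (1 : F →L[ℂ] F)) :
    defectOp L = 1 - (((1 - √(1 - r)) / r : ℝ) : ℂ) • (adjoint L ∘L L) := by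
  set G : E →L[ℂ] E := adjoint L ∘L L
  have hG_sq : G * G = (r : ℂ) • G := by
    rw [mul_def, comp_assoc, ← comp_assoc L, hL]
    ext
    simp [G]
  have mul_self (a : ℝ) : (1 - (a : ℂ) • G) * (1 - (a : ℂ) • G) =
      1 - ((2 * a - a ^ 2 * r : ℝ) : ℂ) • G := by
    simp only [sub_mul, mul_sub, one_mul, mul_one, smul_mul_assoc, mul_smul_comm, hG_sq]
    push_cast
    module
  have isSelfAdjoint (a : ℝ) : IsSelfAdjoint (1 - (a : ℂ) • G) :=
    (IsSelfAdjoint.one _).sub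
      (IsSelfAdjoint.smul (Complex.conj_ofReal a) (.of_nonneg (adjoint_comp_self_nonneg L)))
  have hs := Real.sqrt_nonneg (1 - r)
  have hs_sq := Real.sq_sqrt (sub_nonneg.2 hr₁)
  set s := √(1 - r)
  refine (eq_defectOp ?_ ?_).symm
  -- With `t² = s` this operator is the square of the self-adjoint `1 - (1 - t)/r • L*L`.
  · have hsquare := (isSelfAdjoint ((1 - √s) / r)).mul_self_nonneg
    have hcoeff : 2 * ((1 - √s) / r) - ((1 - √s) / r) ^ 2 * r = (1 - s) / r := by
      have := Real.sq_sqrt hs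
      field_simp
      linarith
    rwa [mul_self, hcoeff] at hsquare
  · have hcoeff : 2 * ((1 - s) / r) - ((1 - s) / r) ^ 2 * r = 1 := by
      field_simp
      linarith
    rw [mul_self, hcoeff, Complex.ofReal_one, one_smul]

lemma defectOp_adjoint_scalarRow {μ₁ μ₂ : ℂ} (hμ : ‖μ₁‖ ^ 2 + ‖μ₂‖ ^ 2 ≤ 1) :
    defectOp (adjoint (scalarRow F μ₁ μ₂)) =
      ((√(1 - (‖μ₁‖ ^ 2 + ‖μ₂‖ ^ 2)) : ℝ) : ℂ) • (1 : F →L[ℂ] F) :=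
  defectOp_adjoint_of_comp_adjoint_eq_smul hμ (scalarRow_comp_adjoint_self μ₁ μ₂)

lemma defectOp_adjoint_scalarRow_injective {μ₁ μ₂ : ℂ} (hμ : ‖μ₁‖ ^ 2 + ‖μ₂‖ ^ 2 < 1) :
    Function.Injective ⇑(defectOp (adjoint (scalarRow F μ₁ μ₂))) := by
  rw [defectOp_adjoint_scalarRow hμ.le]
  exact smul_right_injective F
    (Complex.ofReal_ne_zero.2 (Real.sqrt_pos.2 (sub_pos.2 hμ)).ne')

end Defect

section CharacteristicFunction

variable {A Z : E →L[ℂ] F}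

/-- The characteristic function `θ_A` of a contraction `A`, evaluated at the operator `Z`; for a
point `z` of the ball, `Z` is the row of the scalars `z`. -/
noncomputable def charOp (A Z : E →L[ℂ] F) : E →L[ℂ] F :=
  -A + defectOp (adjoint A) ∘L Ring.inverse (1 - Z ∘L adjoint A) ∘L Z ∘L defectOp A

lemma charOp_comp_defectOp (hA : ‖A‖ ≤ 1) (hZ : IsUnit (1 - Z ∘L adjoint A)) :
    charOp A Z ∘L defectOp A =
      defectOp (adjoint A) ∘L Ring.inverse (1 - Z ∘L adjoint A) ∘L (Z - A) := by
  have hfactor : Z ∘L defectOp A ∘L defectOp A - (1 - Z ∘L adjoint A) ∘L A = Z - A := by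
    rw [← mul_def, defectOp_mul_self hA]
    ext
    simp
  have hcancel : A = Ring.inverse (1 - Z ∘L adjoint A) ∘L (1 - Z ∘L adjoint A) ∘L A := by
    rw [← comp_assoc, ← mul_def, Ring.inverse_mul_cancel _ hZ]; rfl
  rw [charOp, add_comp, neg_comp, comp_defectOp hA, ← hfactor, comp_sub, ← hcancel, comp_sub,
    neg_add_eq_sub]
  simp only [comp_assoc]

lemma charOp_defectOp_eq_zero_iff (hA : ‖A‖ ≤ 1)
    (hinj : Function.Injective ⇑(defectOp (adjoint A))) (hZ : IsUnit (1 - Z ∘L adjoint A)) (X : E) :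
    charOp A Z (defectOp A X) = 0 ↔ A X = Z X := by
  have hinv : Function.Injective ⇑(Ring.inverse (1 - Z ∘L adjoint A)) :=
    (isUnit_iff_bijective.1 hZ.ringInverse).injective
  rw [← comp_apply, charOp_comp_defectOp hA hZ, comp_apply, comp_apply,
    map_eq_zero_iff _ hinj, map_eq_zero_iff _ hinv, sub_apply, sub_eq_zero, eq_comm]

end CharacteristicFunction

section Moebius

variable {A Z L : E →L[ℂ] F}

/-- The Möbius transformation `Φ_L` of the operator ball, `A ↦ L - D_{L*} (1 - A L*)⁻¹ A D_L`. -/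
noncomputable def moebius (L A : E →L[ℂ] F) : E →L[ℂ] F :=
  L - defectOp (adjoint L) ∘L Ring.inverse (1 - A ∘L adjoint L) ∘L A ∘L defectOp L

lemma moebius_sub_moebius (hAL : IsUnit (1 - A ∘L adjoint L)) (hLA : IsUnit (1 - adjoint L ∘L A))
    (hZL : IsUnit (1 - Z ∘L adjoint L)) :
    moebius L A - moebius L Z = defectOp (adjoint L) ∘L Ring.inverse (1 - Z ∘L adjoint L) ∘L
      (Z - A) ∘L Ring.inverse (1 - adjoint L ∘L A) ∘L defectOp L := by
  have hkey := congrArg (defectOp (adjoint L) ∘L · ∘L defectOp L)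
    (inverse_one_sub_comp_comp_sub hAL hLA hZL)
  simp only [comp_sub, sub_comp, comp_assoc] at hkey
  simp only [moebius, comp_sub, sub_comp, sub_sub_sub_cancel_left, hkey]

lemma moebius_apply_eq_iff (hinj : Function.Injective ⇑(defectOp (adjoint L)))
    (hAL : IsUnit (1 - A ∘L adjoint L)) (hLA : IsUnit (1 - adjoint L ∘L A))
    (hZL : IsUnit (1 - Z ∘L adjoint L)) (X : E) :
    moebius L A X = moebius L Z X ↔
      A (Ring.inverse (1 - adjoint L ∘L A) (defectOp L X)) =
        Z (Ring.inverse (1 - adjoint L ∘L A) (defectOp L X)) := by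
  have hinv : Function.Injective ⇑(Ring.inverse (1 - Z ∘L adjoint L)) :=
    (isUnit_iff_bijective.1 hZL.ringInverse).injective
  rw [← sub_eq_zero, ← sub_apply, moebius_sub_moebius hAL hLA hZL]
  simp only [comp_apply, map_eq_zero_iff _ hinj, map_eq_zero_iff _ hinv, sub_apply, sub_eq_zero]
  exact eq_comm

lemma moebius_of_comp_adjoint_eq_smul {r : ℝ} {c : ℂ} (hr₀ : 0 < r) (hr₁ : r ≤ 1)
    (hL : L ∘L adjoint L = (r : ℂ) • (1 : F →L[ℂ] F))
    (hZ : Z ∘L adjoint L = c • (1 : F →L[ℂ] F)) (hc : c ≠ 1) :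
    moebius L Z =
      L - ((√(1 - r) : ℝ) / (1 - c)) • (Z - ((1 - (√(1 - r) : ℝ)) * (c / r)) • L) := by
  have hZL (v : E) : Z (adjoint L (L v)) = c • L v := DFunLike.congr_fun hZ (L v)
  rw [moebius, defectOp_adjoint_of_comp_adjoint_eq_smul hr₁ hL,
    hZ, (isUnit_one_sub_smul_one_and_inverse_eq hc).2,
    defectOp_of_comp_adjoint_eq_smul hr₀ hr₁ hL]
  ext v
  simp only [comp_apply, sub_apply, smul_apply, one_apply_eq_self, map_sub, map_smul, hZL]
  module

lemma moebius_scalarRow {μ₁ μ₂ z₁ z₂ c w₁ w₂ : ℂ} {s : ℝ}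
    (hμ : ‖μ₁‖ ^ 2 + ‖μ₂‖ ^ 2 < 1) (hμ0 : (μ₁, μ₂) ≠ (0, 0)) (hz : ‖z₁‖ ^ 2 + ‖z₂‖ ^ 2 < 1)
    (hs : s = √(1 - (‖μ₁‖ ^ 2 + ‖μ₂‖ ^ 2)))
    (hc : c = z₁ * starRingEnd ℂ μ₁ + z₂ * starRingEnd ℂ μ₂)
    (hw₁ : w₁ = μ₁ - s / (1 - c) *
      (z₁ - (1 - s) * (c / (‖μ₁‖ ^ 2 + ‖μ₂‖ ^ 2 : ℝ)) * μ₁))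
    (hw₂ : w₂ = μ₂ - s / (1 - c) *
      (z₂ - (1 - s) * (c / (‖μ₁‖ ^ 2 + ‖μ₂‖ ^ 2 : ℝ)) * μ₂)) :
    moebius (scalarRow F μ₁ μ₂) (scalarRow F z₁ z₂) = scalarRow F w₁ w₂ := by
  have hZL := scalarRow_comp_adjoint_scalarRow (F := F) z₁ z₂ μ₁ μ₂
  rw [← hc] at hZL
  rw [moebius_of_comp_adjoint_eq_smul (norm_sq_add_norm_sq_pos hμ0) hμ.le
    (scalarRow_comp_adjoint_self μ₁ μ₂) hZL (hc ▸ mul_conj_add_mul_conj_ne_one hz hμ), ← hs,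
    hw₁, hw₂]
  ext v
  simp only [sub_apply, smul_apply, scalarRow_apply]
  module

end Moebius

section JointPointSpectrum

theorem mem_jointPointSpectrum_iff_charOp {A₁ A₂ : F →L[ℂ] F} {z₁ z₂ : ℂ}
    (hA : ‖rowOp A₁ A₂‖ ≤ 1) (hinj : Function.Injective ⇑(defectOp (adjoint (rowOp A₁ A₂))))
    (hZA : IsUnit (1 - scalarRow F z₁ z₂ ∘L adjoint (rowOp A₁ A₂))) :
    (z₁, z₂) ∈ jointPointSpectrum A₁ A₂ ↔ ∃ x : F, x ≠ 0 ∧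
      charOp (rowOp A₁ A₂) (scalarRow F z₁ z₂)
        (defectOp (rowOp A₁ A₂) (WithLp.toLp 2 (x, 0))) = 0 ∧
      charOp (rowOp A₁ A₂) (scalarRow F z₁ z₂)
        (defectOp (rowOp A₁ A₂) (WithLp.toLp 2 (0, x))) = 0 := by
  simp only [charOp_defectOp_eq_zero_iff hA hinj hZA, mem_jointPointSpectrum_iff_rowOp]

theorem mem_jointPointSpectrum_moebius_iff_charOp {A Z L : WithLp 2 (F × F) →L[ℂ] F}
    {B₁ B₂ : F →L[ℂ] F} {w₁ w₂ : ℂ} (hB : moebius L A = rowOp B₁ B₂)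
    (hw : moebius L Z = scalarRow F w₁ w₂) (hA : ‖A‖ ≤ 1)
    (hA_inj : Function.Injective ⇑(defectOp (adjoint A))) (hZA : IsUnit (1 - Z ∘L adjoint A))
    (hL_inj : Function.Injective ⇑(defectOp (adjoint L))) (hAL : IsUnit (1 - A ∘L adjoint L))
    (hLA : IsUnit (1 - adjoint L ∘L A)) (hZL : IsUnit (1 - Z ∘L adjoint L)) :
    (w₁, w₂) ∈ jointPointSpectrum B₁ B₂ ↔ ∃ y : F, y ≠ 0 ∧
      charOp A Z (defectOp A (Ring.inverse (1 - adjoint L ∘L A)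
        (defectOp L (WithLp.toLp 2 (y, 0))))) = 0 ∧
      charOp A Z (defectOp A (Ring.inverse (1 - adjoint L ∘L A)
        (defectOp L (WithLp.toLp 2 (0, y))))) = 0 := by
  simp only [charOp_defectOp_eq_zero_iff hA hA_inj hZA,
    ← moebius_apply_eq_iff hL_inj hAL hLA hZL, hB, hw, mem_jointPointSpectrum_iff_rowOp]

end JointPointSpectrum

end Hilbert

theorem sigma_one_corollary_general
    {H : Type*} [NormedAddCommGroup H] [InnerProductSpace ℂ H] [CompleteSpace H]
    {A₁ A₂ : H →L[ℂ] H}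
    {Dstar : H →L[ℂ] H} (hDstar_pos : 0 ≤ Dstar)
    (hDstar_sq : Dstar * Dstar = 1 - A₁ * adjoint A₁ - A₂ * adjoint A₂)
    (hDstar_inj : Function.Injective ⇑Dstar)
    {Arow : WithLp 2 (H × H) →L[ℂ] H}
    (hArow : ∀ x y : H, Arow ((WithLp.equiv 2 (H × H)).symm (x, y)) = A₁ x + A₂ y)
    {DA : WithLp 2 (H × H) →L[ℂ] WithLp 2 (H × H)} (hDA_pos : 0 ≤ DA)
    (hDA_sq : DA * DA = 1 - (adjoint Arow) ∘L Arow)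
    {μ₁ μ₂ : ℂ} (hμ : ‖μ₁‖ ^ 2 + ‖μ₂‖ ^ 2 < 1) (hμ0 : (μ₁, μ₂) ≠ ((0 : ℂ), (0 : ℂ)))
    {s : ℝ} (hs : s = Real.sqrt (1 - ‖μ₁‖ ^ 2 - ‖μ₂‖ ^ 2))
    {Lrow : WithLp 2 (H × H) →L[ℂ] H}
    (hLrow : ∀ x y : H, Lrow ((WithLp.equiv 2 (H × H)).symm (x, y)) = μ₁ • x + μ₂ • y)
    {DL : WithLp 2 (H × H) →L[ℂ] WithLp 2 (H × H)} (hDL_pos : 0 ≤ DL)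
    (hDL_sq : DL * DL = 1 - (adjoint Lrow) ∘L Lrow)
    {T₁ : H →L[ℂ] H} (hT₁ : T₁ * (1 - Arow ∘L adjoint Lrow) = 1)
    (hT₁' : (1 - Arow ∘L adjoint Lrow) * T₁ = 1)
    {S₂ : WithLp 2 (H × H) →L[ℂ] WithLp 2 (H × H)}
    (hS₂ : S₂ * (1 - (adjoint Lrow) ∘L Arow) = 1) (hS₂' : (1 - (adjoint Lrow) ∘L Arow) * S₂ = 1)
    {B₁ B₂ : H →L[ℂ] H}
    (hB : ∀ x y : H,
      (Lrow - (s : ℂ) • (T₁ ∘L Arow ∘L DL)) ((WithLp.equiv 2 (H × H)).symm (x, y)) = B₁ x + B₂ y)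
    {z₁ z₂ : ℂ} (hz : ‖z₁‖ ^ 2 + ‖z₂‖ ^ 2 < 1)
    {R : H →L[ℂ] H} (hR₁ : R * (1 - z₁ • adjoint A₁ - z₂ • adjoint A₂) = 1)
    (hR₂ : (1 - z₁ • adjoint A₁ - z₂ • adjoint A₂) * R = 1)
    {Zrow : WithLp 2 (H × H) →L[ℂ] H}
    (hZrow : ∀ x y : H, Zrow ((WithLp.equiv 2 (H × H)).symm (x, y)) = z₁ • x + z₂ • y)
    {ip : ℂ} (hip : ip = z₁ * (starRingEnd ℂ) μ₁ + z₂ * (starRingEnd ℂ) μ₂)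
    {w₁ w₂ : ℂ}
    (hw₁ : w₁ = μ₁ - ((s : ℂ) / (1 - ip)) *
      (z₁ - (1 - (s : ℂ)) * (ip / ((‖μ₁‖ ^ 2 + ‖μ₂‖ ^ 2 : ℝ) : ℂ)) * μ₁))
    (hw₂ : w₂ = μ₂ - ((s : ℂ) / (1 - ip)) *
      (z₂ - (1 - (s : ℂ)) * (ip / ((‖μ₁‖ ^ 2 + ‖μ₂‖ ^ 2 : ℝ) : ℂ)) * μ₂)) :
    ((∃ x : H, x ≠ 0 ∧ A₁ x - z₁ • x = 0 ∧ A₂ x - z₂ • x = 0) ∧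
        (∃ x : H, x ≠ 0 ∧ B₁ x - w₁ • x = 0 ∧ B₂ x - w₂ • x = 0)) ↔
      ∃ x y : H, x ≠ 0 ∧ y ≠ 0 ∧
        (-Arow + Dstar ∘L R ∘L Zrow ∘L DA) (DA ((WithLp.equiv 2 (H × H)).symm (x, 0))) = 0 ∧
        (-Arow + Dstar ∘L R ∘L Zrow ∘L DA) (DA ((WithLp.equiv 2 (H × H)).symm (0, x))) = 0 ∧
        (-Arow + Dstar ∘L R ∘L Zrow ∘L DA)
          (DA (S₂ (DL ((WithLp.equiv 2 (H × H)).symm (y, 0))))) = 0 ∧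
        (-Arow + Dstar ∘L R ∘L Zrow ∘L DA)
          (DA (S₂ (DL ((WithLp.equiv 2 (H × H)).symm (0, y))))) = 0 := by
  obtain rfl : Arow = rowOp A₁ A₂ := eq_rowOp hArow
  obtain rfl : Lrow = scalarRow H μ₁ μ₂ := eq_rowOp hLrow
  obtain rfl : Zrow = scalarRow H z₁ z₂ := eq_rowOp hZrow
  rw [sub_sub] at hs hDstar_sq hR₁ hR₂
  rw [← scalarRow_comp_adjoint_rowOp] at hR₁ hR₂
  obtain ⟨hZA, rfl⟩ := isUnit_and_inverse_eq hR₂ hR₁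
  obtain ⟨hAL, rfl⟩ := isUnit_and_inverse_eq hT₁' hT₁
  obtain ⟨hLA, rfl⟩ := isUnit_and_inverse_eq hS₂' hS₂
  have hA := norm_le_one_of_mul_self_eq hDA_pos hDA_sq
  obtain rfl := eq_defectOp hDA_pos hDA_sq
  obtain rfl := eq_defectOp hDL_pos hDL_sq
  obtain rfl : Dstar = defectOp (adjoint (rowOp A₁ A₂)) := eq_defectOp hDstar_pos <| by
    rw [hDstar_sq, adjoint_adjoint, rowOp_comp_adjoint_rowOp]; rfl
  have hΦA : moebius (scalarRow H μ₁ μ₂) (rowOp A₁ A₂) = rowOp B₁ B₂ := eq_rowOp fun x y => by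
    rw [← hB, moebius, defectOp_adjoint_scalarRow hμ.le, ← hs]; rfl
  have hΦZ := moebius_scalarRow (F := H) hμ hμ0 hz hs hip hw₁ hw₂
  have hσA := mem_jointPointSpectrum_iff_charOp hA hDstar_inj hZA
  have hσB := mem_jointPointSpectrum_moebius_iff_charOp hΦA hΦZ hA hDstar_inj hZA
    (defectOp_adjoint_scalarRow_injective hμ) hAL hLA
    (isUnit_one_sub_scalarRow_comp_adjoint_scalarRow hz hμ)
  simp only [sub_eq_zero]
  exact (and_congr hσA hσB).trans
    ⟨fun ⟨⟨x, hx, hx₁, hx₂⟩, y, hy, hy₁, hy₂⟩ => ⟨x, y, hx, hy, hx₁, hx₂, hy₁, hy₂⟩,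
      fun ⟨x, y, hx, hy, hx₁, hx₂, hy₁, hy₂⟩ => ⟨⟨x, hx, hx₁, hx₂⟩, y, hy, hy₁, hy₂⟩⟩

theorem sigma_one_corollary
    {H : Type*} [NormedAddCommGroup H] [InnerProductSpace ℂ H] [CompleteSpace H]
    (A₁ A₂ : H →L[ℂ] H)
    (hcomm : A₁ * A₂ = A₂ * A₁)
    (hcontr : A₁ * adjoint A₁ + A₂ * adjoint A₂ ≤ 1)
    (hpure : ∀ x : H, Tendsto (fun n => ((A₁ * adjoint A₁ + A₂ * adjoint A₂) ^ n) x) atTop (nhds 0))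
    (Dstar : H →L[ℂ] H) (hDstar_pos : 0 ≤ Dstar)
    (hDstar_sq : Dstar * Dstar = 1 - A₁ * adjoint A₁ - A₂ * adjoint A₂)
    (hDstar_inj : Function.Injective ⇑Dstar)
    (Arow : WithLp 2 (H × H) →L[ℂ] H)
    (hArow : ∀ x y : H, Arow ((WithLp.equiv 2 (H × H)).symm (x, y)) = A₁ x + A₂ y)
    (DA : WithLp 2 (H × H) →L[ℂ] WithLp 2 (H × H)) (hDA_pos : 0 ≤ DA)
    (hDA_sq : DA * DA = 1 - (adjoint Arow) ∘L Arow)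
    (μ₁ μ₂ : ℂ) (hμ : ‖μ₁‖ ^ 2 + ‖μ₂‖ ^ 2 < 1) (hμ0 : (μ₁, μ₂) ≠ ((0 : ℂ), (0 : ℂ)))
    (s : ℝ) (hs : s = Real.sqrt (1 - ‖μ₁‖ ^ 2 - ‖μ₂‖ ^ 2))
    (Lrow : WithLp 2 (H × H) →L[ℂ] H)
    (hLrow : ∀ x y : H, Lrow ((WithLp.equiv 2 (H × H)).symm (x, y)) = μ₁ • x + μ₂ • y)
    (DL : WithLp 2 (H × H) →L[ℂ] WithLp 2 (H × H)) (hDL_pos : 0 ≤ DL)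
    (hDL_sq : DL * DL = 1 - (adjoint Lrow) ∘L Lrow)
    (T₁ : H →L[ℂ] H) (hT₁ : T₁ * (1 - Arow ∘L adjoint Lrow) = 1)
    (hT₁' : (1 - Arow ∘L adjoint Lrow) * T₁ = 1)
    (S₂ : WithLp 2 (H × H) →L[ℂ] WithLp 2 (H × H))
    (hS₂ : S₂ * (1 - (adjoint Lrow) ∘L Arow) = 1) (hS₂' : (1 - (adjoint Lrow) ∘L Arow) * S₂ = 1)
    (B₁ B₂ : H →L[ℂ] H)
    (hB : ∀ x y : H, (Lrow - (s : ℂ) • (T₁ ∘L Arow ∘L DL)) ((WithLp.equiv 2 (H × H)).symm (x, y)) = B₁ x + B₂ y)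
    (hBpure : ∀ x : H, Tendsto (fun n => ((B₁ * adjoint B₁ + B₂ * adjoint B₂) ^ n) x) atTop (nhds 0))
    (z₁ z₂ : ℂ) (hz : ‖z₁‖ ^ 2 + ‖z₂‖ ^ 2 < 1)
    (R : H →L[ℂ] H) (hR₁ : R * (1 - z₁ • adjoint A₁ - z₂ • adjoint A₂) = 1)
    (hR₂ : (1 - z₁ • adjoint A₁ - z₂ • adjoint A₂) * R = 1)
    (Zrow : WithLp 2 (H × H) →L[ℂ] H)
    (hZrow : ∀ x y : H, Zrow ((WithLp.equiv 2 (H × H)).symm (x, y)) = z₁ • x + z₂ • y)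
    (ip : ℂ) (hip : ip = z₁ * (starRingEnd ℂ) μ₁ + z₂ * (starRingEnd ℂ) μ₂)
    (w₁ w₂ : ℂ)
    (hw₁ : w₁ = μ₁ - ((s : ℂ) / (1 - ip)) * (z₁ - (1 - (s : ℂ)) * (ip / ((‖μ₁‖ ^ 2 + ‖μ₂‖ ^ 2 : ℝ) : ℂ)) * μ₁))
    (hw₂ : w₂ = μ₂ - ((s : ℂ) / (1 - ip)) * (z₂ - (1 - (s : ℂ)) * (ip / ((‖μ₁‖ ^ 2 + ‖μ₂‖ ^ 2 : ℝ) : ℂ)) * μ₂)) :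
    ((∃ x : H, x ≠ 0 ∧ A₁ x - z₁ • x = 0 ∧ A₂ x - z₂ • x = 0) ∧
        (∃ x : H, x ≠ 0 ∧ B₁ x - w₁ • x = 0 ∧ B₂ x - w₂ • x = 0)) ↔
      ∃ x y : H, x ≠ 0 ∧ y ≠ 0 ∧
        (-Arow + Dstar ∘L R ∘L Zrow ∘L DA) (DA ((WithLp.equiv 2 (H × H)).symm (x, 0))) = 0 ∧
        (-Arow + Dstar ∘L R ∘L Zrow ∘L DA) (DA ((WithLp.equiv 2 (H × H)).symm (0, x))) = 0 ∧
        (-Arow + Dstar ∘L R ∘L Zrow ∘L DA) (DA (S₂ (DL ((WithLp.equiv 2 (H × H)).symm (y, 0))))) = 0 ∧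
        (-Arow + Dstar ∘L R ∘L Zrow ∘L DA) (DA (S₂ (DL ((WithLp.equiv 2 (H × H)).symm (0, y))))) = 0 := by
  exact sigma_one_corollary_general hDstar_pos hDstar_sq hDstar_inj hArow hDA_pos hDA_sq hμ hμ0 hs
    hLrow hDL_pos hDL_sq hT₁ hT₁' hS₂ hS₂' hB hz hR₁ hR₂ hZrow hip hw₁ hw₂
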